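/- Limsup inequality (recovery sequences): let (a,b) ⊂ ℝ be a bounded interval and p ∈ [1,+∞). For every step function u ∈ S((a,b)) there exists a sequence {u_n} with u_n ∈ PC_{δ(n)}(a,b) for every n≥2 such that u_n → u in L^p((a,b)) and limsup_{n→+∞} RDPM_n((a,b),u_n) ≤ (4/3)·J((a,b),u). -/

import Mathlib

/-!
The recovery sequence samples the step function at the left endpoints of the grid cells. The
discrete derivative of the sample vanishes except on one cell of length `δ` per jump point, where
it is at most `C / δ` for a bound `C` on the oscillation of `u`. Hence each jump contributes at
most `(δ/ω²) log (1 + C²/δ²)` to the energy. Since `δ/ω² = 1 / log n` and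
`1/δ² = n^{4/3} (log n)^{2/3}`, this cost tends to `4/3` for every `C ≠ 0`, so a crude bound on
the heights of the jumps is enough.
-/

open MeasureTheory Filter Set

namespace PeronaMalik

/-- `a_{δ,*} = δ⌊a/δ⌋`, the lower `δ`-approximation of `a`. -/
noncomputable def lowGrid (δ a : ℝ) : ℝ := δ * (⌊a / δ⌋ : ℤ)

/-- `b_δ^* = δ⌈b/δ⌉`, the upper `δ`-approximation of `b`. -/
noncomputable def highGrid (δ b : ℝ) : ℝ := δ * (⌈b / δ⌉ : ℤ)

/-- `u` is piecewise constant at scale `δ`: constant on every interval `[zδ, (z+1)δ)`. -/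
def IsPC (δ : ℝ) (u : ℝ → ℝ) : Prop :=
  ∀ z : ℤ, ∀ x ∈ Set.Ico ((z : ℝ) * δ) (((z : ℝ) + 1) * δ), u x = u ((z : ℝ) * δ)

/-- Discrete derivative `D^δ u (x) = (u(x+δ) - u(x))/δ`. -/
noncomputable def Dd (δ : ℝ) (u : ℝ → ℝ) (x : ℝ) : ℝ := (u (x + δ) - u x) / δ

/-- The discrete Perona–Malik functional with fidelity term on `(a,b)`. -/
noncomputable def DPMF (n : ℕ) (β : ℝ) (f : ℝ → ℝ) (a b : ℝ) (u : ℝ → ℝ) : ℝ :=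
  (∫ x in lowGrid (1 / (n : ℝ)) a..(highGrid (1 / (n : ℝ)) b - 1 / (n : ℝ)),
      Real.log (1 + (Dd (1 / (n : ℝ)) u x) ^ 2)) +
    β * ∫ x in a..b, (u x - f x) ^ 2

/-- `u` is a minimizer of `DPMF n β f (0,1)` over `PC_{1/n}(0,1)`. -/
def IsMinimizer (n : ℕ) (β : ℝ) (f : ℝ → ℝ) (u : ℝ → ℝ) : Prop :=
  IsPC (1 / (n : ℝ)) u ∧
    ∀ v : ℝ → ℝ, IsPC (1 / (n : ℝ)) v → DPMF n β f 0 1 u ≤ DPMF n β f 0 1 v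

/-- `m(n,β,f)`, the minimum value of the discrete Perona–Malik functional. -/
noncomputable def mval (n : ℕ) (β : ℝ) (f : ℝ → ℝ) : ℝ :=
  sInf ((fun u => DPMF n β f 0 1 u) '' {u | IsPC (1 / (n : ℝ)) u})

/-- `ω(n) = (log n / n)^{1/3}`. -/
noncomputable def omg (n : ℕ) : ℝ := (Real.log n / n) ^ ((1 : ℝ) / 3)

/-- `δ(n) = 1/(n ω(n))`. -/
noncomputable def dlt (n : ℕ) : ℝ := 1 / ((n : ℝ) * omg n)

/-- The rescaled discrete Perona–Malik functional. -/
noncomputable def RDPM (n : ℕ) (a b : ℝ) (u : ℝ → ℝ) : ℝ :=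
  (1 / omg n ^ 2) *
    ∫ x in lowGrid (dlt n) a..(highGrid (dlt n) b - dlt n),
      Real.log (1 + (Dd (dlt n) u x) ^ 2)

/-- The rescaled discrete Perona–Malik functional with fidelity term. -/
noncomputable def RDPMF (n : ℕ) (β : ℝ) (f : ℝ → ℝ) (a b : ℝ) (u : ℝ → ℝ) : ℝ :=
  RDPM n a b u + β * ∫ x in Set.Ioo a b, (u x - f x) ^ 2

/-- `u` is a step function with finitely many jumps on `(a,b)`. -/
def IsStep (a b : ℝ) (u : ℝ → ℝ) : Prop :=
  ∃ (s : Finset ℝ) (c : ℝ) (J : ℝ → ℝ),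
    (∀ p ∈ s, p ∈ Set.Ioo a b ∧ J p ≠ 0) ∧
    ∀ x ∈ Set.Ioo a b, u x = c + ∑ p ∈ s, (if p ≤ x then J p else 0)

/-- The set of jump (discontinuity) points of `u` inside `(a,b)`. -/
def jumpSet (a b : ℝ) (u : ℝ → ℝ) : Set ℝ :=
  {x ∈ Set.Ioo a b | ¬ ContinuousAt u x}

/-- The limit functional `JF(α,β,f,(a,b),u) = α·#jumps + β∫(u-f)²`. -/
noncomputable def JF (α β : ℝ) (f : ℝ → ℝ) (a b : ℝ) (u : ℝ → ℝ) : ℝ :=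
  α * ((jumpSet a b u).ncard : ℝ) + β * ∫ x in Set.Ioo a b, (u x - f x) ^ 2

/-- Strict convergence in `BV((a,b))`: `L¹` convergence plus convergence of
total variations. -/
def StrictBV (useq : ℕ → ℝ → ℝ) (u : ℝ → ℝ) (a b : ℝ) : Prop :=
  Tendsto (fun k => ∫ x in Set.Ioo a b, |useq k x - u x|) atTop (nhds 0) ∧
  Tendsto (fun k => eVariationOn (useq k) (Set.Ioo a b)) atTop
    (nhds (eVariationOn u (Set.Ioo a b)))

/-- Locally strict convergence in `BV_loc(ℝ)`: strict convergence on every bounded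
interval whose endpoints are not jump points of the limit. -/
def LocStrictBV (useq : ℕ → ℝ → ℝ) (u : ℝ → ℝ) : Prop :=
  ∀ a b : ℝ, a < b → ContinuousAt u a → ContinuousAt u b → StrictBV useq u a b

/-- `S(x) = 2⌊(x+1)/2⌋`. -/
noncomputable def stairS (x : ℝ) : ℝ := 2 * (⌊(x + 1) / 2⌋ : ℤ)

/-- The canonical `(H,V)`-staircase `S_{H,V}(x) = V·S(x/H)`. -/
noncomputable def canStair (H V : ℝ) (x : ℝ) : ℝ := V * stairS (x / H)

/-- Oblique translations of the canonical `(H,V)`-staircase. -/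
def Obl (H V : ℝ) (v : ℝ → ℝ) : Prop :=
  ∃ τ ∈ Set.Icc (-1 : ℝ) 1, ∀ x, v x = canStair H V (x - H * τ) + V * τ

/-- Graph translations of horizontal type of the canonical `(H,V)`-staircase. -/
def Orz (H V : ℝ) (v : ℝ → ℝ) : Prop :=
  ∃ τ ∈ Set.Icc (-1 : ℝ) 1, ∀ x, v x = canStair H V (x - H * τ)

/-- `μ_n(β,L,M)`: minimum of the rescaled functional with affine forcing term. -/
noncomputable def muDisc (n : ℕ) (β L M : ℝ) : ℝ :=
  sInf ((fun u => RDPMF n β (fun x => M * x) 0 L u) '' {u | IsPC (dlt n) u})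

/-- `μ*_n(β,L,M)`: same as `μ_n` but with boundary conditions `u(0)=0`, `u(L^*)=ML`. -/
noncomputable def muDiscStar (n : ℕ) (β L M : ℝ) : ℝ :=
  sInf ((fun u => RDPMF n β (fun x => M * x) 0 L u) ''
    {u | IsPC (dlt n) u ∧ u 0 = 0 ∧ u (highGrid (dlt n) L - dlt n) = M * L})

/-- `μ(α,β,L,M)`: minimum of the limit functional with affine forcing term. -/
noncomputable def muLim (α β L M : ℝ) : ℝ :=
  sInf ((fun u => JF α β (fun x => M * x) 0 L u) '' {u | IsStep 0 L u})

/-- `μ*(α,β,L,M)`: same as `μ` but with boundary values `u(0⁺)=0`, `u(L⁻)=ML`. -/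
noncomputable def muLimStar (α β L M : ℝ) : ℝ :=
  sInf ((fun u => JF α β (fun x => M * x) 0 L u) ''
    {u | IsStep 0 L u ∧ Tendsto u (nhdsWithin 0 (Set.Ioi 0)) (nhds 0) ∧
         Tendsto u (nhdsWithin L (Set.Iio L)) (nhds (M * L))})

/-- `u` and `v` have the same boundary values `u(a⁺)=v(a⁺)`, `u(b⁻)=v(b⁻)`. -/
def SameBdry (a b : ℝ) (u v : ℝ → ℝ) : Prop :=
  (∀ c : ℝ, Tendsto v (nhdsWithin a (Set.Ioi a)) (nhds c) →
     Tendsto u (nhdsWithin a (Set.Ioi a)) (nhds c)) ∧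
  (∀ c : ℝ, Tendsto v (nhdsWithin b (Set.Iio b)) (nhds c) →
     Tendsto u (nhdsWithin b (Set.Iio b)) (nhds c))

/-- `v` is a local minimizer for `JF(α,β,f,(a,b),·)` among step functions with the
same boundary values. -/
def IsLocalMinJF (α β : ℝ) (f : ℝ → ℝ) (a b : ℝ) (v : ℝ → ℝ) : Prop :=
  IsStep a b v ∧
  ∀ u : ℝ → ℝ, IsStep a b u → SameBdry a b u v → JF α β f a b v ≤ JF α β f a b u

/-- `v` is an entire local minimizer for `JF(α,β,f,·,·)`. -/
def IsEntireLocalMinJF (α β : ℝ) (f : ℝ → ℝ) (v : ℝ → ℝ) : Prop :=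
  ∀ a b : ℝ, a < b → IsLocalMinJF α β f a b v

/-- `v` is a local minimizer for `RDPMF_n(β,f,(a,b),·)` among piecewise constant
functions with the same boundary values. -/
def IsLocalMinRDPMF (n : ℕ) (β : ℝ) (f : ℝ → ℝ) (a b : ℝ) (v : ℝ → ℝ) : Prop :=
  IsPC (dlt n) v ∧
  ∀ u : ℝ → ℝ, IsPC (dlt n) u →
    u (lowGrid (dlt n) a) = v (lowGrid (dlt n) a) →
    u (highGrid (dlt n) b - dlt n) = v (highGrid (dlt n) b - dlt n) →
    RDPMF n β f a b v ≤ RDPMF n β f a b u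

open scoped Topology

/-! ### Step functions and their jump points -/

/-- The step function on all of `ℝ` with jump points `s` and jump heights `J`, right-continuous
and equal to `c` near `-∞`. It extends the formula in `IsStep` beyond `(a,b)`, because the grid
points at which it will be sampled may lie outside `(a,b)`. -/
noncomputable def stepFn (s : Finset ℝ) (c : ℝ) (J : ℝ → ℝ) (x : ℝ) : ℝ :=
  c + ∑ q ∈ s, (if q ≤ x then J q else 0)

/-- `v` can change its value only at points of `s`: `v x = v y` whenever `(x, y]` misses `s`.
The half-open interval encodes right-continuity at the jumps. -/
def JumpsOnlyIn (s : Set ℝ) (v : ℝ → ℝ) : Prop :=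
  ∀ ⦃x y : ℝ⦄, x ≤ y → Disjoint (Ioc x y) s → v x = v y

section StepFn

variable (s : Finset ℝ) (c : ℝ) (J : ℝ → ℝ)

lemma measurable_stepFn : Measurable (stepFn s c J) :=
  measurable_const.add <| Finset.measurable_fun_sum _ fun _ _ =>
    Measurable.ite measurableSet_Ici measurable_const measurable_const

lemma jumpsOnlyIn_stepFn : JumpsOnlyIn s (stepFn s c J) := by
  intro x y hxy hdisj
  refine congrArg (c + ·) (Finset.sum_congr rfl fun q hq => ?_)
  have hq_iff : q ≤ x ↔ q ≤ y :=
    ⟨fun h => h.trans hxy, fun hqy => not_lt.1 fun hxq => disjoint_right.1 hdisj hq ⟨hxq, hqy⟩⟩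
  simp only [hq_iff]

lemma abs_stepFn_sub_le (x y : ℝ) : |stepFn s c J x - stepFn s c J y| ≤ ∑ q ∈ s, |J q| := by
  rw [stepFn, stepFn, add_sub_add_left_eq_sub, ← Finset.sum_sub_distrib]
  refine (Finset.abs_sum_le_sum_abs _ _).trans (Finset.sum_le_sum fun q _ => ?_)
  split_ifs <;> simp

lemma continuousAt_ite_le {q x : ℝ} (h : q ≠ x) (j : ℝ) :
    ContinuousAt (fun y : ℝ => if q ≤ y then j else 0) x := by
  rcases h.lt_or_gt with hqx | hxq
  · exact continuousAt_const.congr <|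
      (eventually_gt_nhds hqx).mono fun _ hy => (if_pos hy.le).symm
  · exact continuousAt_const.congr <|
      (eventually_lt_nhds hxq).mono fun _ hy => (if_neg hy.not_ge).symm

lemma not_continuousAt_ite_le (q : ℝ) {j : ℝ} (hj : j ≠ 0) :
    ¬ ContinuousAt (fun y : ℝ => if q ≤ y then j else 0) q := by
  intro hcont
  have hne : ∀ᶠ y in 𝓝 q, (if q ≤ y then j else 0) ≠ 0 :=
    hcont.eventually_ne (by simpa only [le_refl, if_true] using hj)
  obtain ⟨y, hy, hyq⟩ :=
    ((hne.filter_mono nhdsWithin_le_nhds).and (self_mem_nhdsWithin (s := Iio q))).exists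
  exact hy (if_neg (not_le.2 hyq))

variable {s c J}

lemma continuousAt_stepFn {x : ℝ} (hx : x ∉ s) : ContinuousAt (stepFn s c J) x :=
  continuousAt_const.add <| tendsto_finsetSum _ fun _ hq =>
    continuousAt_ite_le (ne_of_mem_of_not_mem hq hx) _

lemma not_continuousAt_stepFn {x : ℝ} (hx : x ∈ s) (hJ : J x ≠ 0) :
    ¬ ContinuousAt (stepFn s c J) x := by
  intro hcont
  -- Subtracting the step function without the jump at `x` isolates that jump.
  have hrest : ContinuousAt (stepFn (s.erase x) c J) x :=
    continuousAt_stepFn (Finset.notMem_erase x s)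
  refine not_continuousAt_ite_le x hJ ((hcont.sub hrest).congr (.of_forall fun y => ?_))
  simp only [stepFn, Pi.sub_apply]
  rw [← Finset.add_sum_erase s _ hx]
  ring

lemma continuousAt_stepFn_iff (hJ : ∀ q ∈ s, J q ≠ 0) {x : ℝ} :
    ContinuousAt (stepFn s c J) x ↔ x ∉ s :=
  ⟨fun hcont hx => not_continuousAt_stepFn hx (hJ x hx) hcont, continuousAt_stepFn⟩

lemma ae_continuousAt_stepFn (μ : Measure ℝ) [NullSingletonClass μ] :
    ∀ᵐ x ∂μ, ContinuousAt (stepFn s c J) x :=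
  (s.countable_toSet.ae_notMem μ).mono fun _ hx => continuousAt_stepFn hx

lemma jumpSet_eq_of_eqOn_stepFn {a b : ℝ} {u : ℝ → ℝ}
    (hs : ∀ q ∈ s, q ∈ Ioo a b ∧ J q ≠ 0) (hu : EqOn u (stepFn s c J) (Ioo a b)) :
    jumpSet a b u = s := by
  have hcont {x : ℝ} (hx : x ∈ Ioo a b) : ContinuousAt u x ↔ x ∉ s :=
    (continuousAt_congr (hu.eventuallyEq_of_mem (isOpen_Ioo.mem_nhds hx))).trans
      (continuousAt_stepFn_iff fun q hq => (hs q hq).2)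
  ext x
  exact ⟨fun ⟨hx, hjump⟩ => not_not.1 (mt (hcont hx).2 hjump),
    fun hx => ⟨(hs x hx).1, fun h => (hcont (hs x hx).1).1 h hx⟩⟩

end StepFn

/-! ### Sampling on the grid -/

/-- The sample of `v` at scale `δ`, which takes on each cell `[zδ,(z+1)δ)` the value of `v` at
the left endpoint. -/
noncomputable def gridSample (δ : ℝ) (v : ℝ → ℝ) (x : ℝ) : ℝ := v (lowGrid δ x)

/-- The only grid cell on which the discrete derivative of a sample sees a jump at `q`: the cell
`[zδ,(z+1)δ)` with `q ∈ (zδ,(z+1)δ]`. -/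
noncomputable def jumpCell (δ q : ℝ) : Set ℝ := Ico (highGrid δ q - δ) (highGrid δ q)

lemma measurable_lowGrid (δ : ℝ) : Measurable (lowGrid δ) := by
  unfold lowGrid
  fun_prop

section Grid

variable {δ : ℝ} (hδ : 0 < δ)
include hδ

lemma lowGrid_le (x : ℝ) : lowGrid δ x ≤ x := by
  rw [lowGrid, mul_comm]
  exact sub_nonneg.1 (Int.sub_floor_div_mul_nonneg x hδ)

lemma lt_lowGrid_add (x : ℝ) : x < lowGrid δ x + δ := by
  rw [lowGrid, mul_comm, ← sub_lt_iff_lt_add']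
  exact Int.sub_floor_div_mul_lt x hδ

lemma lowGrid_add_self (x : ℝ) : lowGrid δ (x + δ) = lowGrid δ x + δ := by
  rw [lowGrid, lowGrid, add_div, div_self hδ.ne', Int.floor_add_one, Int.cast_add, Int.cast_one,
    mul_add_one]

lemma lowGrid_eq_of_mem_Ico {z : ℤ} {x : ℝ} (hx : x ∈ Ico (z * δ) ((z + 1) * δ)) :
    lowGrid δ x = z * δ := by
  have hfloor : ⌊x / δ⌋ = z := by
    rw [Int.floor_eq_iff, le_div_iff₀ hδ, div_lt_iff₀ hδ]
    exact hx
  rw [lowGrid, hfloor, mul_comm]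

lemma highGrid_eq_lowGrid_add {q x : ℝ} (hq : q ∈ Ioc (lowGrid δ x) (lowGrid δ x + δ)) :
    highGrid δ q = lowGrid δ x + δ := by
  unfold lowGrid at hq ⊢
  have hceil : ⌈q / δ⌉ = ⌊x / δ⌋ + 1 := by
    rw [Int.ceil_eq_iff, lt_div_iff₀ hδ, div_le_iff₀ hδ]
    push_cast
    constructor <;> linarith [hq.1, hq.2]
  rw [highGrid, hceil, Int.cast_add, Int.cast_one, mul_add_one]

lemma mem_jumpCell {q x : ℝ} (hq : q ∈ Ioc (lowGrid δ x) (lowGrid δ x + δ)) :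
    x ∈ jumpCell δ q := by
  rw [jumpCell, highGrid_eq_lowGrid_add hδ hq, add_sub_cancel_right]
  exact ⟨lowGrid_le hδ x, lt_lowGrid_add hδ x⟩

lemma volume_real_jumpCell (q : ℝ) : volume.real (jumpCell δ q) = δ := by
  rw [jumpCell, Real.volume_real_Ico_of_le (by linarith), sub_sub_cancel]

lemma isPC_gridSample (v : ℝ → ℝ) : IsPC δ (gridSample δ v) := by
  intro z x hx
  have hz : (z : ℝ) * δ ∈ Ico (z * δ) ((z + 1) * δ) := ⟨le_rfl, by linarith⟩
  rw [gridSample, gridSample, lowGrid_eq_of_mem_Ico hδ hx, lowGrid_eq_of_mem_Ico hδ hz]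

end Grid

section Convergence

variable {ι : Type*} {l : Filter ι} {δ : ι → ℝ} (hδ : Tendsto δ l (𝓝[>] 0))
include hδ

lemma tendsto_lowGrid (x : ℝ) : Tendsto (fun i => lowGrid (δ i) x) l (𝓝 x) := by
  have hpos : ∀ᶠ i in l, 0 < δ i := hδ.eventually self_mem_nhdsWithin
  have hlow : Tendsto (fun i => x - δ i) l (𝓝 x) := by
    simpa only [sub_zero] using (tendsto_nhds_of_tendsto_nhdsWithin hδ).const_sub x
  refine tendsto_of_tendsto_of_tendsto_of_le_of_le' hlow tendsto_const_nhds ?_ ?_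
  · exact hpos.mono fun i hi => (sub_lt_iff_lt_add.2 (lt_lowGrid_add hi x)).le
  · exact hpos.mono fun i hi => lowGrid_le hi x

lemma tendsto_gridSample {v : ℝ → ℝ} {x : ℝ} (hv : ContinuousAt v x) :
    Tendsto (fun i => gridSample (δ i) v x) l (𝓝 (v x)) :=
  hv.tendsto.comp (tendsto_lowGrid hδ x)

lemma tendsto_integral_abs_gridSample_sub_rpow [l.IsCountablyGenerated] {μ : Measure ℝ}
    [IsFiniteMeasure μ] {v : ℝ → ℝ} (hv : Measurable v) {C : ℝ}
    (hC : ∀ x y, |v x - v y| ≤ C) (hcont : ∀ᵐ x ∂μ, ContinuousAt v x) {p : ℝ} (hp : 0 < p) :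
    Tendsto (fun i => ∫ x, |gridSample (δ i) v x - v x| ^ p ∂μ) l (𝓝 0) := by
  rw [← integral_zero ℝ ℝ (μ := μ)]
  refine tendsto_integral_filter_of_dominated_convergence (fun _ => C ^ p)
    (.of_forall fun i => ?_) (.of_forall fun i => .of_forall fun x => ?_)
    (integrable_const _) (hcont.mono fun x hx => ?_)
  · have hsample : Measurable (gridSample (δ i) v) := hv.comp (measurable_lowGrid _)
    exact ((hsample.sub hv).abs.pow_const p).aestronglyMeasurable
  · rw [Real.norm_of_nonneg (by positivity)]
    exact Real.rpow_le_rpow (abs_nonneg _) (hC _ _) hp.le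
  · have hlim := ((tendsto_gridSample hδ hx).sub_const (v x)).abs.rpow_const (.inr hp.le)
    rwa [sub_self, abs_zero, Real.zero_rpow hp.ne'] at hlim

end Convergence

/-! ### The energy of a sample -/

lemma log_one_add_sq_nonneg (t : ℝ) : 0 ≤ Real.log (1 + t ^ 2) :=
  Real.log_nonneg (le_add_of_nonneg_right (sq_nonneg t))

section Energy

variable {δ C : ℝ} {s : Finset ℝ} {v : ℝ → ℝ}

lemma abs_Dd_le (hδ : 0 < δ) (hC : ∀ x y, |v x - v y| ≤ C) (x : ℝ) : |Dd δ v x| ≤ C / δ := by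
  rw [Dd, abs_div, abs_of_pos hδ]
  exact div_le_div_of_nonneg_right (hC _ _) hδ.le

lemma Dd_gridSample_eq_zero (hδ : 0 < δ) (hs : JumpsOnlyIn s v) {x : ℝ}
    (hx : ∀ q ∈ s, x ∉ jumpCell δ q) : Dd δ (gridSample δ v) x = 0 := by
  have hdisj : Disjoint (Ioc (lowGrid δ x) (lowGrid δ x + δ)) (s : Set ℝ) :=
    disjoint_right.2 fun q hq hmem => hx q hq (mem_jumpCell hδ hmem)
  have heq : v (lowGrid δ x) = v (lowGrid δ x + δ) :=
    hs (le_add_of_nonneg_right hδ.le) hdisj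
  rw [Dd, gridSample, gridSample, lowGrid_add_self hδ, heq, sub_self, zero_div]

lemma log_Dd_gridSample_le_indicator (hδ : 0 < δ) (hC : ∀ x y, |v x - v y| ≤ C)
    (hs : JumpsOnlyIn s v) (x : ℝ) :
    Real.log (1 + Dd δ (gridSample δ v) x ^ 2) ≤
      (⋃ q ∈ s, jumpCell δ q).indicator (fun _ => Real.log (1 + (C / δ) ^ 2)) x := by
  by_cases hx : x ∈ ⋃ q ∈ s, jumpCell δ q
  · rw [indicator_of_mem hx]
    have hD : |Dd δ (gridSample δ v) x| ≤ C / δ := abs_Dd_le hδ (fun _ _ => hC _ _) x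
    have hsq : Dd δ (gridSample δ v) x ^ 2 ≤ (C / δ) ^ 2 := sq_le_sq.2 (hD.trans (le_abs_self _))
    gcongr
  · rw [indicator_of_notMem hx]
    have hD : Dd δ (gridSample δ v) x = 0 :=
      Dd_gridSample_eq_zero hδ hs fun q hq hxq => hx (mem_biUnion hq hxq)
    simp [hD]

lemma volume_real_biUnion_jumpCell_le (hδ : 0 < δ) (s : Finset ℝ) :
    volume.real (⋃ q ∈ s, jumpCell δ q) ≤ s.card * δ :=
  calc volume.real (⋃ q ∈ s, jumpCell δ q)
      ≤ ∑ q ∈ s, volume.real (jumpCell δ q) := measureReal_biUnion_finset_le s _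
    _ = s.card * δ := by
      simp only [volume_real_jumpCell hδ, Finset.sum_const, nsmul_eq_mul]

lemma abs_integral_log_Dd_gridSample_le (hδ : 0 < δ) (hC : ∀ x y, |v x - v y| ≤ C)
    (hs : JumpsOnlyIn s v) (y z : ℝ) :
    |∫ x in y..z, Real.log (1 + Dd δ (gridSample δ v) x ^ 2)| ≤
      s.card * δ * Real.log (1 + (C / δ) ^ 2) := by
  set U := ⋃ q ∈ s, jumpCell δ q
  set L := Real.log (1 + (C / δ) ^ 2)
  have hL : 0 ≤ L := log_one_add_sq_nonneg _
  have hU : MeasurableSet U := s.measurableSet_biUnion fun _ _ => measurableSet_Ico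
  have hU_fin : volume U ≠ ⊤ :=
    (measure_biUnion_lt_top s.finite_toSet fun _ _ => measure_Ico_lt_top).ne
  have hint : Integrable (U.indicator fun _ => L) :=
    (integrable_indicator_iff hU).2 (integrableOn_const hU_fin)
  calc |∫ x in y..z, Real.log (1 + Dd δ (gridSample δ v) x ^ 2)|
      ≤ ∫ x in uIoc y z, |Real.log (1 + Dd δ (gridSample δ v) x ^ 2)| := by
        simpa only [← Real.norm_eq_abs] using intervalIntegral.norm_integral_le_integral_norm_uIoc
    _ ≤ ∫ x in uIoc y z, U.indicator (fun _ => L) x := by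
        refine integral_mono_of_nonneg (.of_forall fun _ => abs_nonneg _) hint.integrableOn
          (.of_forall fun x => ?_)
        simp only [abs_of_nonneg (log_one_add_sq_nonneg _)]
        exact log_Dd_gridSample_le_indicator hδ hC hs x
    _ ≤ ∫ x, U.indicator (fun _ => L) x :=
        setIntegral_le_integral hint (.of_forall fun _ => indicator_nonneg (fun _ _ => hL) _)
    _ = volume.real U * L := integral_indicator_const L hU
    _ ≤ s.card * δ * L :=
        mul_le_mul_of_nonneg_right (volume_real_biUnion_jumpCell_le hδ s) hL

end Energy

/-! ### The cost of one jump -/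

/-- The rescaled energy of a jump of height `C` across a single cell, that is, of a discrete
derivative `C / δ(n)` on an interval of length `δ(n)`. -/
noncomputable def jumpCost (C : ℝ) (n : ℕ) : ℝ :=
  dlt n / omg n ^ 2 * Real.log (1 + (C / dlt n) ^ 2)

lemma log_natCast_pos {n : ℕ} (hn : 2 ≤ n) : 0 < Real.log n :=
  Real.log_pos (Nat.one_lt_cast.2 hn)

lemma omg_pos {n : ℕ} (hn : 2 ≤ n) : 0 < omg n := by
  have hlog := log_natCast_pos hn
  unfold omg
  positivity

lemma dlt_pos {n : ℕ} (hn : 2 ≤ n) : 0 < dlt n := by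
  have hω := omg_pos hn
  unfold dlt
  positivity

lemma omg_pow_three (n : ℕ) : omg n ^ 3 = Real.log n / n := by
  have hnonneg : 0 ≤ Real.log n / n := div_nonneg (Real.log_natCast_nonneg n) n.cast_nonneg
  rw [omg, ← Real.rpow_natCast, ← Real.rpow_mul hnonneg]
  norm_num

lemma log_dlt {n : ℕ} (hn : 2 ≤ n) :
    Real.log (dlt n) = -(2 / 3 * Real.log n + 1 / 3 * Real.log (Real.log n)) := by
  have hn0 : (n : ℝ) ≠ 0 := Nat.cast_ne_zero.2 (by omega)
  have hlog := log_natCast_pos hn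
  have hω : Real.log (omg n) = 1 / 3 * (Real.log (Real.log n) - Real.log n) := by
    rw [omg, Real.log_rpow (by positivity), Real.log_div hlog.ne' hn0]
  rw [dlt, one_div, Real.log_inv, Real.log_mul hn0 (omg_pos hn).ne', hω]
  ring

lemma dlt_div_omg_sq (n : ℕ) : dlt n / omg n ^ 2 = 1 / Real.log n := by
  rcases eq_or_ne n 0 with rfl | hn
  · simp [dlt]
  have hn0 : (n : ℝ) ≠ 0 := Nat.cast_ne_zero.2 hn
  have hcube : (n : ℝ) * omg n ^ 3 = Real.log n := by
    rw [omg_pow_three, mul_div_cancel₀ _ hn0]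
  rw [dlt, div_div, mul_assoc, ← pow_succ', hcube]

lemma jumpCost_eq (C : ℝ) {n : ℕ} (hn : 2 ≤ n) :
    jumpCost C n = Real.log (dlt n ^ 2 + C ^ 2) / Real.log n + 4 / 3
      + 2 / 3 * (Real.log (Real.log n) / Real.log n) := by
  have hlog := log_natCast_pos hn
  have hδ := dlt_pos hn
  have hsplit : Real.log (1 + (C / dlt n) ^ 2) =
      Real.log (dlt n ^ 2 + C ^ 2) - 2 * Real.log (dlt n) := by
    rw [div_pow, one_add_div (by positivity), Real.log_div (by positivity) (by positivity),
      Real.log_pow, Nat.cast_ofNat]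
  rw [jumpCost, dlt_div_omg_sq, hsplit, log_dlt hn]
  field_simp
  ring

lemma tendsto_log_natCast_atTop : Tendsto (fun n : ℕ => Real.log n) atTop atTop :=
  Real.tendsto_log_atTop.comp tendsto_natCast_atTop_atTop

lemma tendsto_dlt : Tendsto dlt atTop (𝓝[>] 0) := by
  have hlog := tendsto_log_natCast_atTop
  have hloglog := Real.tendsto_log_atTop.comp hlog
  have hexponent : Tendsto
      (fun n : ℕ => -(2 / 3 * Real.log n + 1 / 3 * Real.log (Real.log n))) atTop atBot :=
    tendsto_neg_atTop_atBot.comp <| (hlog.const_mul_atTop (by norm_num)).atTop_add_atTop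
      (hloglog.const_mul_atTop (by norm_num))
  refine (Real.tendsto_exp_atBot_nhdsGT.comp hexponent).congr' ?_
  filter_upwards [eventually_ge_atTop 2] with n hn
  rw [Function.comp_apply, ← log_dlt hn, Real.exp_log (dlt_pos hn)]

lemma tendsto_jumpCost {C : ℝ} (hC : C ≠ 0) : Tendsto (jumpCost C) atTop (𝓝 (4 / 3)) := by
  have hδ : Tendsto dlt atTop (𝓝 0) := tendsto_nhds_of_tendsto_nhdsWithin tendsto_dlt
  have hnum : Tendsto (fun n => Real.log (dlt n ^ 2 + C ^ 2)) atTop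
      (𝓝 (Real.log (0 ^ 2 + C ^ 2))) :=
    ((hδ.pow 2).add_const _).log (by positivity)
  have hmain : Tendsto (fun n : ℕ => Real.log (dlt n ^ 2 + C ^ 2) / Real.log n) atTop (𝓝 0) :=
    hnum.div_atTop tendsto_log_natCast_atTop
  have hloglog : Tendsto (fun n : ℕ => Real.log (Real.log n) / Real.log n) atTop (𝓝 0) :=
    Real.isLittleO_log_id_atTop.tendsto_div_nhds_zero.comp tendsto_log_natCast_atTop
  have hsum := (hmain.add_const (4 / 3)).add (hloglog.const_mul (2 / 3))
  rw [zero_add, mul_zero, add_zero] at hsum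
  exact hsum.congr' ((eventually_ge_atTop 2).mono fun n hn => (jumpCost_eq C hn).symm)

lemma abs_RDPM_gridSample_le {C : ℝ} {s : Finset ℝ} {v : ℝ → ℝ} (a b : ℝ)
    (hC : ∀ x y, |v x - v y| ≤ C) (hs : JumpsOnlyIn s v) {n : ℕ} (hn : 2 ≤ n) :
    |RDPM n a b (gridSample (dlt n) v)| ≤ s.card * jumpCost C n := by
  have hω : 0 ≤ 1 / omg n ^ 2 := by positivity
  rw [RDPM, abs_mul, abs_of_nonneg hω]
  refine (mul_le_mul_of_nonneg_left
    (abs_integral_log_Dd_gridSample_le (dlt_pos hn) hC hs _ _) hω).trans_eq ?_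
  rw [jumpCost]
  ring

/-! ### The limsup inequality -/

-- The bound is on `|f|` because a real `limsup` of an `f` tending to `-∞` would be a junk value.
lemma limsup_le_of_eventually_abs_le {ι : Type*} {l : Filter ι} [l.NeBot] {f g : ι → ℝ} {L : ℝ}
    (hfg : ∀ᶠ i in l, |f i| ≤ g i) (hg : Tendsto g l (𝓝 L)) : limsup f l ≤ L := by
  have hbdd : IsBoundedUnder (· ≥ ·) l f :=
    hg.neg.isBoundedUnder_ge.mono_ge (hfg.mono fun _ hi => (abs_le.1 hi).1)
  rw [← hg.limsup_eq]
  exact limsup_le_limsup (hfg.mono fun _ hi => (abs_le.1 hi).2) hbdd.isCoboundedUnder_le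
    hg.isBoundedUnder_le

theorem rescaled_limsup_inequality_general (a b : ℝ) {p : ℝ} (hp : 0 < p) {u : ℝ → ℝ}
    (hu : IsStep a b u) :
    ∃ useq : ℕ → ℝ → ℝ,
      (∀ n, 2 ≤ n → IsPC (dlt n) (useq n)) ∧
      Tendsto (fun n => ∫ x in Ioo a b, |useq n x - u x| ^ p) atTop (𝓝 0) ∧
      limsup (fun n => RDPM n a b (useq n)) atTop ≤ 4 / 3 * ((jumpSet a b u).ncard : ℝ) := by
  obtain ⟨s, c, J, hs, hu_eq⟩ := hu
  -- The summand `1` keeps the oscillation bound nonzero when there are no jumps.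
  obtain ⟨C, hC_ne, hC⟩ : ∃ C ≠ 0, ∀ x y, |stepFn s c J x - stepFn s c J y| ≤ C :=
    ⟨∑ q ∈ s, |J q| + 1, by positivity, fun x y =>
      (abs_stepFn_sub_le s c J x y).trans (le_add_of_nonneg_right zero_le_one)⟩
  refine ⟨fun n => gridSample (dlt n) (stepFn s c J),
    fun n hn => isPC_gridSample (dlt_pos hn) _, ?_, ?_⟩
  · refine (tendsto_integral_abs_gridSample_sub_rpow tendsto_dlt (measurable_stepFn s c J) hC
      (ae_continuousAt_stepFn (volume.restrict (Ioo a b))) hp).congr fun n => ?_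
    refine setIntegral_congr_fun measurableSet_Ioo fun x hx => ?_
    simp only [hu_eq x hx, stepFn]
  · rw [jumpSet_eq_of_eqOn_stepFn hs hu_eq, ncard_coe_finset, mul_comm]
    refine limsup_le_of_eventually_abs_le ?_ ((tendsto_jumpCost hC_ne).const_mul _)
    filter_upwards [eventually_ge_atTop 2] with n hn using
      abs_RDPM_gridSample_le a b hC (jumpsOnlyIn_stepFn s c J) hn

/-- Limsup inequality: every step function `u ∈ S((a,b))` admits a
recovery sequence `u_n ∈ PC_{δ(n)}(a,b)` with `u_n → u` in `L^p((a,b))` and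
`limsup RDPM_n((a,b),u_n) ≤ (4/3)·J((a,b),u)`. -/
theorem rescaled_limsup_inequality
    (a b : ℝ) (hab : a < b) (p : ℝ) (hp : 1 ≤ p)
    (u : ℝ → ℝ) (hu : IsStep a b u) :
    ∃ useq : ℕ → ℝ → ℝ,
      (∀ n, 2 ≤ n → IsPC (dlt n) (useq n)) ∧
      Tendsto (fun n => ∫ x in Set.Ioo a b, |useq n x - u x| ^ p) atTop (nhds 0) ∧
      Filter.limsup (fun n => RDPM n a b (useq n)) atTop ≤
        (4 / 3 : ℝ) * ((jumpSet a b u).ncard : ℝ) :=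
  rescaled_limsup_inequality_general a b (zero_lt_one.trans_le hp) hu

end PeronaMalik
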